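/- For every even integer n ≥ 8, the line graph L(K_n) of the complete graph K_n is a connected simple graph of order N = n(n-1)/2 satisfying f_o(L(K_n)) < 2⌊N/4⌋. Hence the conjecture of Berman, Wang and Wargo, that every connected simple graph of order N satisfies f_o(G) ≥ 2⌊N/4⌋, is false. -/

import Mathlib

/-!
A set of edges of `H` that induces an odd subgraph of `L(H)` is the edge set of a graph `G` on the
vertices of `H`, and there the edge `uv` has degree `d(u) + d(v) - 2`. So the induced subgraph is
odd iff every edge of `G` joins a vertex of odd degree to one of even degree; in particular `G` is
bipartite with parts `A` (odd degrees) and `B` (even degrees). If the number `2m` of vertices is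
even, then `|A|` and `|B|` have the same parity. If both are odd, a vertex of `B` has at most
`|A| - 1` neighbours; if both are even, a vertex of `A` has at most `|B| - 1`. Hence `G` has at most
as many edges as a product of two integers with sum `2m - 1`, so at most `m (m - 1)`, which is less
than `2 ⌊m (2m - 1) / 4⌋` once `m ≥ 4`.
-/

open scoped Classical

/-- `fo G` is the maximum number of vertices of an odd induced subgraph of `G`,
i.e. an induced subgraph in which every vertex has odd degree. -/
noncomputable def fo {V : Type*} [Fintype V] (G : SimpleGraph V) : ℕ :=
  sSup {n | ∃ s : Finset V,
    (∀ v ∈ s, Odd ((s.filter (fun u => G.Adj v u)).card)) ∧ s.card = n}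

section

open SimpleGraph Finset

variable {V : Type*}

section Connectivity

variable {G : SimpleGraph V}

lemma lineGraph_reachable_of_mem_of_mem {e f : G.edgeSet} {v : V} (hve : v ∈ (e : Sym2 V))
    (hvf : v ∈ (f : Sym2 V)) : G.lineGraph.Reachable e f := by
  by_cases hef : e = f
  · rw [hef]
  · exact (lineGraph_adj_iff_exists.2 ⟨hef, v, hve, hvf⟩).reachable

lemma lineGraph_reachable_of_walk {u v : V} (p : G.Walk u v) {e f : G.edgeSet}
    (hue : u ∈ (e : Sym2 V)) (hvf : v ∈ (f : Sym2 V)) : G.lineGraph.Reachable e f := by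
  induction p generalizing e with
  | nil => exact lineGraph_reachable_of_mem_of_mem hue hvf
  | @cons u w _ huw _ ih =>
    let g : G.edgeSet := ⟨s(u, w), huw⟩
    have heg : G.lineGraph.Reachable e g :=
      lineGraph_reachable_of_mem_of_mem hue (Sym2.mem_mk_left u w)
    exact heg.trans (ih (Sym2.mem_mk_right u w) hvf)

lemma preconnected_lineGraph (hG : G.Preconnected) : G.lineGraph.Preconnected := by
  intro e f
  obtain ⟨p⟩ := hG (e : Sym2 V).out.1 (f : Sym2 V).out.1
  exact lineGraph_reachable_of_walk p (Sym2.out_fst_mem _) (Sym2.out_fst_mem _)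

lemma connected_lineGraph [Nontrivial V] (hG : G.Connected) : G.lineGraph.Connected := by
  obtain ⟨u⟩ := hG.nonempty
  obtain ⟨v, huv⟩ := hG.preconnected.exists_adj_of_nontrivial u
  exact (connected_iff _).2 ⟨preconnected_lineGraph hG.preconnected, ⟨⟨s(u, v), huv⟩⟩⟩

end Connectivity

section ParityBipartite

variable [Fintype V] {G : SimpleGraph V}

lemma card_edgeFinset_le_mul_pred_of_degree_ne {s t : Finset V}
    (hst : G.IsBipartiteWith (s : Set V) t) (hdeg : ∀ v ∈ s, G.degree v ≠ #t) :
    #G.edgeFinset ≤ #s * (#t - 1) := by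
  have hle : ∀ v ∈ s, G.degree v ≤ #t - 1 := fun v hv =>
    Nat.le_sub_one_of_lt ((isBipartiteWith_degree_le hst hv).lt_of_ne (hdeg v hv))
  calc #G.edgeFinset = ∑ v ∈ s, G.degree v :=
        (isBipartiteWith_sum_degrees_eq_card_edges hst).symm
    _ ≤ #s * (#t - 1) := sum_le_card_nsmul s _ _ hle

lemma mul_pred_le_mul_pred_of_add_eq {a b m : ℕ} (hab : a + b = 2 * m) :
    a * (b - 1) ≤ m * (m - 1) := by
  rcases Nat.eq_zero_or_pos b with rfl | hb
  · simp
  obtain ⟨b, rfl⟩ := Nat.exists_eq_add_of_le' hb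
  obtain ⟨m, rfl⟩ := Nat.exists_eq_add_of_le' (show 1 ≤ m by lia)
  have hsq : 4 * (a * b) ≤ 4 * ((m + 1) * m) + 1 :=
    calc 4 * (a * b) = 4 * a * b := by ring
      _ ≤ (a + b) ^ 2 := four_mul_le_sq_add a b
      _ = (2 * m + 1) ^ 2 := by rw [show a + b = 2 * m + 1 by lia]
      _ = 4 * ((m + 1) * m) + 1 := by ring
  simp only [Nat.add_sub_cancel]
  lia

lemma card_edgeFinset_le_of_isBipartiteWith_odd_even {s t : Finset V} {m : ℕ}
    (hst : G.IsBipartiteWith (s : Set V) t) (hs : ∀ v ∈ s, Odd (G.degree v))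
    (ht : ∀ v ∈ t, Even (G.degree v)) (hcard : #s + #t = 2 * m) :
    #G.edgeFinset ≤ m * (m - 1) := by
  have hparity : Even #s ↔ Even #t := Nat.even_add.1 (hcard ▸ even_two_mul m)
  rcases Nat.even_or_odd #s with hs_even | hs_odd
  · have hdeg : ∀ v ∈ s, G.degree v ≠ #t := fun v hv h =>
      Nat.not_even_iff_odd.2 (hs v hv) (h ▸ hparity.1 hs_even)
    exact (card_edgeFinset_le_mul_pred_of_degree_ne hst hdeg).trans
      (mul_pred_le_mul_pred_of_add_eq hcard)
  · have hdeg : ∀ v ∈ t, G.degree v ≠ #s := fun v hv h =>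
      Nat.not_even_iff_odd.2 hs_odd (h ▸ ht v hv)
    exact (card_edgeFinset_le_mul_pred_of_degree_ne hst.symm hdeg).trans
      (mul_pred_le_mul_pred_of_add_eq ((add_comm _ _).trans hcard))

lemma isBipartiteWith_odd_even_of_odd_degree_add
    (hG : ∀ ⦃u v⦄, G.Adj u v → Odd (G.degree u + G.degree v)) :
    G.IsBipartiteWith {v | Odd (G.degree v)} {v | Even (G.degree v)} where
  disjoint := Set.disjoint_left.2 fun _ hodd heven => Nat.not_even_iff_odd.2 hodd heven
  mem_of_adj u v huv := by
    have hiff : Odd (G.degree u) ↔ Even (G.degree v) := Nat.odd_add.1 (hG huv)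
    have hiff' : Odd (G.degree v) ↔ Even (G.degree u) := Nat.odd_add.1 (hG huv.symm)
    rcases Nat.even_or_odd (G.degree u) with hu | hu
    · exact .inr ⟨hu, hiff'.2 hu⟩
    · exact .inl ⟨hu, hiff.1 hu⟩

lemma card_edgeFinset_le_of_odd_degree_add {m : ℕ} (hV : Fintype.card V = 2 * m)
    (hG : ∀ ⦃u v⦄, G.Adj u v → Odd (G.degree u + G.degree v)) :
    #G.edgeFinset ≤ m * (m - 1) := by
  let s : Finset V := {v | Odd (G.degree v)}
  let t : Finset V := {v | Even (G.degree v)}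
  have hst : G.IsBipartiteWith (s : Set V) t := by
    simpa only [s, t, coe_filter_univ] using isBipartiteWith_odd_even_of_odd_degree_add hG
  have hcard : #s + #t = 2 * m := by
    simpa only [Nat.not_odd_iff_even, card_univ, hV] using
      card_filter_add_card_filter_not (s := univ) (fun v => Odd (G.degree v))
  exact card_edgeFinset_le_of_isBipartiteWith_odd_even hst (fun v hv => (mem_filter.1 hv).2)
    (fun v hv => (mem_filter.1 hv).2) hcard

end ParityBipartite

section EdgeSubgraph

variable {H : SimpleGraph V} {s : Finset H.edgeSet}

/-- The spanning subgraph of `H` whose edges are those in `s`. Its line graph is the subgraph of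
`H.lineGraph` induced by `s`. -/
def edgeSubgraph (s : Finset H.edgeSet) : SimpleGraph V :=
  fromEdgeSet (Subtype.val '' (s : Set H.edgeSet))

lemma edgeSet_edgeSubgraph (s : Finset H.edgeSet) :
    (edgeSubgraph s).edgeSet = Subtype.val '' (s : Set H.edgeSet) := by
  have hloopless : Disjoint (Subtype.val '' (s : Set H.edgeSet)) Sym2.diagSet := by
    rw [Set.disjoint_left]
    rintro _ ⟨e, -, rfl⟩
    exact not_isDiag_of_mem_edgeSet H e.2
  rw [edgeSubgraph, edgeSet_fromEdgeSet, hloopless.sdiff_eq_left]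

lemma edgeFinset_edgeSubgraph [Fintype V] (s : Finset H.edgeSet) :
    (edgeSubgraph s).edgeFinset = s.map (Function.Embedding.subtype _) := by
  rw [← coe_inj, coe_edgeFinset, edgeSet_edgeSubgraph, coe_map, Function.Embedding.coe_subtype]

/-- The edges in `s` that are incident to the vertex `v`. -/
noncomputable def edgesAt (s : Finset H.edgeSet) (v : V) : Finset H.edgeSet :=
  {e ∈ s | v ∈ (e : Sym2 V)}

lemma mem_edgesAt {e : H.edgeSet} {v : V} : e ∈ edgesAt s v ↔ e ∈ s ∧ v ∈ (e : Sym2 V) :=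
  mem_filter

lemma degree_edgeSubgraph [Fintype V] (s : Finset H.edgeSet) (v : V) :
    (edgeSubgraph s).degree v = #(edgesAt s v) := by
  rw [← card_incidenceFinset_eq_degree, incidenceFinset_eq_filter, edgeFinset_edgeSubgraph,
    filter_map, card_map]
  rfl

lemma lineGraph_adj_iff_of_eq_mk {e f : H.edgeSet} {u v : V} (he : (e : Sym2 V) = s(u, v)) :
    H.lineGraph.Adj e f ↔ f ≠ e ∧ (u ∈ (f : Sym2 V) ∨ v ∈ (f : Sym2 V)) := by
  simp only [lineGraph_adj_iff_exists, he, Sym2.mem_iff, or_and_right, exists_or,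
    exists_eq_left, ne_comm]

lemma edgesAt_union_edgesAt {e : H.edgeSet} (hes : e ∈ s) {u v : V}
    (he : (e : Sym2 V) = s(u, v)) :
    edgesAt s u ∪ edgesAt s v = insert e {f ∈ s | H.lineGraph.Adj e f} := by
  ext f
  simp only [mem_union, mem_insert, mem_filter, mem_edgesAt, lineGraph_adj_iff_of_eq_mk he]
  by_cases hfe : f = e
  · simp [hfe, he, hes]
  · simp only [hfe, ne_eq, not_false_eq_true, true_and, false_or, and_or_left]

lemma edgesAt_inter_edgesAt {e : H.edgeSet} (hes : e ∈ s) {u v : V}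
    (he : (e : Sym2 V) = s(u, v)) : edgesAt s u ∩ edgesAt s v = {e} := by
  have hne : u ≠ v := Adj.ne (G := H) (by simpa only [he, mem_edgeSet] using e.2)
  ext f
  rw [edgesAt, edgesAt, ← filter_and, mem_filter, Sym2.mem_and_mem_iff hne, ← he, Subtype.coe_inj,
    mem_singleton]
  exact and_iff_right_of_imp fun hfe => hfe ▸ hes

lemma card_filter_lineGraph_adj_add_two {e : H.edgeSet} (hes : e ∈ s) {u v : V}
    (he : (e : Sym2 V) = s(u, v)) :
    #{f ∈ s | H.lineGraph.Adj e f} + 2 = #(edgesAt s u) + #(edgesAt s v) := by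
  rw [← card_union_add_card_inter, edgesAt_union_edgesAt hes he, edgesAt_inter_edgesAt hes he,
    card_singleton, card_insert_of_notMem (by simp)]

end EdgeSubgraph

section OddInduced

/-- The vertex set `s` induces an odd subgraph of `G`: every vertex of `s` has an odd number of
neighbours in `s`. The condition is phrased as in `fo`, without passing to the induced graph. -/
def InducesOdd (G : SimpleGraph V) (s : Finset V) : Prop :=
  ∀ v ∈ s, Odd #{u ∈ s | G.Adj v u}

lemma fo_le_of_forall_inducesOdd [Fintype V] {G : SimpleGraph V} {k : ℕ}
    (hG : ∀ s, InducesOdd G s → #s ≤ k) : fo G ≤ k := by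
  refine csSup_le ⟨0, ∅, by simp, rfl⟩ ?_
  rintro _ ⟨s, hs, rfl⟩
  exact hG s hs

variable [Fintype V] {H : SimpleGraph V}

lemma InducesOdd.odd_degree_add {s : Finset H.edgeSet} (hs : InducesOdd H.lineGraph s) ⦃u v : V⦄
    (huv : (edgeSubgraph s).Adj u v) :
    Odd ((edgeSubgraph s).degree u + (edgeSubgraph s).degree v) := by
  rw [← mem_edgeSet, edgeSet_edgeSubgraph] at huv
  obtain ⟨e, hes, he⟩ := huv
  rw [degree_edgeSubgraph, degree_edgeSubgraph, ← card_filter_lineGraph_adj_add_two hes he]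
  exact (hs e hes).add_even even_two

lemma fo_lineGraph_le [Fintype H.edgeSet] {m : ℕ} (hV : Fintype.card V = 2 * m) :
    fo H.lineGraph ≤ m * (m - 1) := by
  refine fo_le_of_forall_inducesOdd fun s hs => ?_
  calc #s = #(edgeSubgraph s).edgeFinset := by rw [edgeFinset_edgeSubgraph, card_map]
    _ ≤ m * (m - 1) := card_edgeFinset_le_of_odd_degree_add hV hs.odd_degree_add

end OddInduced

lemma mul_pred_lt_two_mul_choose_two_div_four {m : ℕ} (hm : 4 ≤ m) :
    m * (m - 1) < 2 * ((2 * m).choose 2 / 4) := by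
  obtain ⟨q, hq⟩ : Even (m * (m - 1)) := Nat.even_mul_pred_self m
  have hchoose : (2 * m).choose 2 = 4 * q + m :=
    calc (2 * m).choose 2 = m * (2 * m - 1) := by
          rw [Nat.choose_two_right, mul_assoc, Nat.mul_div_cancel_left _ two_pos]
      _ = 2 * (m * (m - 1)) + m := by
          obtain ⟨m, rfl⟩ := Nat.exists_eq_add_of_le' (show 1 ≤ m by lia)
          rw [show 2 * (m + 1) - 1 = 2 * m + 1 by lia, Nat.add_sub_cancel]
          ring
      _ = 4 * q + m := by lia
  lia

end

/-- For every even `n ≥ 8`, the line graph of `K_n` is a connected graph of order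
`N = n (n - 1) / 2` with `f_o(L(K_n)) < 2 ⌊N / 4⌋`, disproving the conjecture of
Berman, Wang and Wargo. -/
theorem lineGraph_completeGraph_counterexample (n : ℕ) (hn : Even n) (h8 : 8 ≤ n) :
    (SimpleGraph.lineGraph (⊤ : SimpleGraph (Fin n))).Connected ∧
    Fintype.card (⊤ : SimpleGraph (Fin n)).edgeSet = n * (n - 1) / 2 ∧
    fo (SimpleGraph.lineGraph (⊤ : SimpleGraph (Fin n))) <
      2 * ((n * (n - 1) / 2) / 4) := by
  obtain ⟨m, rfl⟩ := even_iff_exists_two_mul.1 hn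
  have : Nontrivial (Fin (2 * m)) := Fin.nontrivial_iff_two_le.2 (by lia)
  refine ⟨connected_lineGraph SimpleGraph.connected_top, ?_, ?_⟩
  · rw [← Nat.choose_two_right, ← SimpleGraph.edgeFinset_card,
      SimpleGraph.card_edgeFinset_top_eq_card_choose_two, Fintype.card_fin]
  · rw [← Nat.choose_two_right]
    exact (fo_lineGraph_le (Fintype.card_fin _)).trans_lt
      (mul_pred_lt_two_mul_choose_two_div_four (by lia))
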